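/- Suppose γ > 0 and β < 0. Then for every integer Δn ≥ 2 there exist a Floquet exponent ξ ∈ (0, 1/2] and k > 0 such that ω(−Δn+ξ) = ω(ξ), i.e., the modes −Δn and 0 collide, where c₀ = γ/k² + βk² and ω(x) = k²·x·(c₀ − βk²x²) − γ/x. -/

import Mathlib

/-- Dispersion function of the linearized Ostrovsky equation,
with `c₀ = γ/k² + βk²` built in. -/
noncomputable def omega (γ β k x : ℝ) : ℝ :=
  k^2 * x * ((γ/k^2 + β*k^2) - β*k^2*x^2) - γ/x

/-- Away from `k = 0`, the dispersion function depends on `k` only through `k ^ 4`. -/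
lemma omega_eq (γ β x : ℝ) {k : ℝ} (hk : k ≠ 0) :
    omega γ β k x = γ * x + β * k ^ 4 * (x - x ^ 3) - γ / x := by
  have h : k ^ 2 * (γ / k ^ 2) = γ := by field_simp
  unfold omega
  linear_combination x * h

theorem zero_mode_collision_neg_beta (γ β : ℝ) (hγ : 0 < γ) (hβ : β < 0) :
    ∀ Δn : ℤ, 2 ≤ Δn →
      ∃ ξ k : ℝ, 0 < ξ ∧ ξ ≤ 1/2 ∧ 0 < k ∧
        omega γ β k (-(Δn : ℝ) + ξ) = omega γ β k ξ := by
  intro Δn hn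
  have hN : (2 : ℝ) ≤ (Δn : ℝ) := by exact_mod_cast hn
  generalize (Δn : ℝ) = N at hN
  have h1 : 0 < N ^ 2 - 1 := by nlinarith
  have h3 : 0 < N ^ 2 - 3 := by nlinarith
  have hN0 : N ≠ 0 := by positivity
  -- For `ξ = 1 / N` the collision condition becomes `k ^ 4 = K`.
  obtain ⟨K, hK⟩ : ∃ K, K = γ * N ^ 2 / (-β * (N ^ 2 - 1) ^ 2 * (N ^ 2 - 3)) := ⟨_, rfl⟩
  have hβ' : 0 < -β := neg_pos.mpr hβ
  have hKpos : 0 < K := by rw [hK]; positivity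
  have hk : 0 < √(√K) := by positivity
  have hk4 : √(√K) ^ 4 = K := by
    rw [show 4 = 2 * 2 from rfl, pow_mul, Real.sq_sqrt (Real.sqrt_nonneg K),
      Real.sq_sqrt hKpos.le]
  refine ⟨1 / N, √(√K), by positivity, one_div_le_one_div_of_le two_pos hN, hk, ?_⟩
  have hy : -N + 1 / N = -(N ^ 2 - 1) / N := by field_simp; ring
  rw [omega_eq _ _ _ hk.ne', omega_eq _ _ _ hk.ne', hk4, hy, hK]
  have h1' := h1.ne'
  have h3' := h3.ne'
  have hβ0 := hβ.ne
  field_simp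
  ring
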